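/- Let P be a flag 3-polytope with p_4 ≤ 2. If a 4-belt of P borders a 4-loop L_4, then the four facets of L_4 are pairwise different. -/

import Mathlib

open Set

noncomputable section

/-- The ambient space `ℝ³`. -/
abbrev E3 := EuclideanSpace ℝ (Fin 3)

/-- The cyclic successor in `Fin k`. -/
def nxt {k : ℕ} (i : Fin k) : Fin k := ⟨(i.1 + 1) % k, Nat.mod_lt _ i.pos⟩

/-- The cyclic predecessor in `Fin k`. -/
def prv {k : ℕ} (i : Fin k) : Fin k := ⟨(i.1 + (k - 1)) % k, Nat.mod_lt _ i.pos⟩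

/-- A convex polytope in `ℝ³`: the convex hull of a finite set of points. -/
def IsPolytope (P : Set E3) : Prop := ∃ V : Finset E3, P = convexHull ℝ (V : Set E3)

/-- The dimension of a subset of `ℝ³` (the dimension of its affine hull). -/
def setDim (A : Set E3) : ℕ := Module.finrank ℝ ↥(vectorSpan ℝ A)

/-- A face of a polytope: a nonempty closed convex extreme subset. -/
def IsFaceOf (F P : Set E3) : Prop :=
  F.Nonempty ∧ IsClosed F ∧ Convex ℝ F ∧ IsExtreme ℝ P F

/-- A facet: a `2`-dimensional face. -/
def IsFacetOf (F P : Set E3) : Prop := IsFaceOf F P ∧ setDim F = 2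

/-- An edge: a `1`-dimensional face. -/
def IsEdgeOf (F P : Set E3) : Prop := IsFaceOf F P ∧ setDim F = 1

/-- A vertex: a point whose singleton is a face. -/
def IsVertexOf (v : E3) (P : Set E3) : Prop := IsFaceOf {v} P

/-- The set of facets of `P`. -/
def facets (P : Set E3) : Set (Set E3) := {F | IsFacetOf F P}

/-- A simple 3-polytope: a 3-dimensional convex polytope each of whose vertices
is contained in exactly 3 facets. -/
def IsSimplePolytope3 (P : Set E3) : Prop :=
  IsPolytope P ∧ setDim P = 3 ∧
    ∀ v : E3, IsVertexOf v P → {F | IsFacetOf F P ∧ v ∈ F}.ncard = 3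

/-- The number of edges of a facet `F` of `P`. -/
def facetEdges (P F : Set E3) : ℕ := {e | IsEdgeOf e P ∧ e ⊆ F}.ncard

/-- `pVec P k` is the number of `k`-gonal facets of `P`. -/
def pVec (P : Set E3) (k : ℕ) : ℕ := {F | IsFacetOf F P ∧ facetEdges P F = k}.ncard

/-- A (mathematical) fullerene: a simple 3-polytope with all facets pentagons
and hexagons. -/
def IsFullerene (P : Set E3) : Prop :=
  IsSimplePolytope3 P ∧ ∀ F, IsFacetOf F P → facetEdges P F = 5 ∨ facetEdges P F = 6

/-- A `k`-loop in `P` (`k ≥ 2`): a cyclic sequence of facets in which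
(cyclically) consecutive facets intersect in an edge; a `1`-loop is a single facet. -/
def IsLoop (P : Set E3) {k : ℕ} (L : Fin k → Set E3) : Prop :=
  0 < k ∧ (∀ i, IsFacetOf (L i) P) ∧ (2 ≤ k → ∀ i, IsEdgeOf (L i ∩ L (nxt i)) P)

/-- A simple loop: a loop with pairwise different facets. -/
def IsSimpleLoop (P : Set E3) {k : ℕ} (L : Fin k → Set E3) : Prop :=
  IsLoop P L ∧ Function.Injective L

/-- A `k`-belt (`k ≥ 3`): a `k`-loop such that for `k = 3` the three facets have empty
total intersection, and for `k ≥ 4` two facets intersect iff they are cyclically successive. -/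
def IsBelt (P : Set E3) {k : ℕ} (L : Fin k → Set E3) : Prop :=
  3 ≤ k ∧ IsLoop P L ∧
    (k = 3 → ∀ i, L i ∩ L (nxt i) ∩ L (nxt (nxt i)) = ∅) ∧
    (4 ≤ k → ∀ p q, p ≠ q → ((L p ∩ L q).Nonempty ↔ q = nxt p ∨ p = nxt q))

/-- A flag 3-polytope: a simple 3-polytope different from the tetrahedron
(i.e. not having exactly 4 facets) without 3-belts. -/
def IsFlag3Polytope (P : Set E3) : Prop :=
  IsSimplePolytope3 P ∧ (facets P).ncard ≠ 4 ∧ ∀ B : Fin 3 → Set E3, ¬ IsBelt P B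

/-- `γ` is the simple edge-cycle of `P` traced by the cyclically ordered distinct
vertices `v 0, …, v (n-1)` (`n ≥ 3`), consecutive ones joined by edges of `P`. -/
def IsSimpleEdgeCycleVia (P γ : Set E3) {n : ℕ} (v : Fin n → E3) : Prop :=
  3 ≤ n ∧ Function.Injective v ∧ (∀ i, IsVertexOf (v i) P) ∧
    (∀ i, IsEdgeOf (segment ℝ (v i) (v (nxt i))) P) ∧
    γ = ⋃ i, segment ℝ (v i) (v (nxt i))

/-- A simple edge-cycle in the graph of `P`. -/
def IsSimpleEdgeCycle (P γ : Set E3) : Prop :=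
  ∃ (n : ℕ) (v : Fin n → E3), IsSimpleEdgeCycleVia P γ v

/-- `C` is a connected component of the set `A`. -/
def IsCompOf (C A : Set E3) : Prop := ∃ x ∈ A, C = connectedComponentIn A x

/-- The loop `L` is obtained by walking round the simple edge-cycle `γ` inside the
connected component `C` of `∂P ∖ γ`: the facets of `L` lie on the side `C`, and the
edges of `γ`, in cyclic order, lie in the facets of `L` in cyclic order (the loop
index advancing exactly when the facet changes, and making exactly one turn). -/
def WalksRound (P γ C : Set E3) {k : ℕ} (L : Fin k → Set E3) : Prop :=
  IsLoop P L ∧ (∀ i, intrinsicInterior ℝ (L i) ⊆ C) ∧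
    ∃ (n : ℕ) (v : Fin n → E3) (φ : Fin n → Fin k),
      IsSimpleEdgeCycleVia P γ v ∧
      (∀ i, segment ℝ (v i) (v (nxt i)) ⊆ L (φ i)) ∧
      (∀ i, φ (nxt i) = φ i ∨ φ (nxt i) = nxt (φ i)) ∧
      Function.Surjective φ ∧
      (2 ≤ k → (Finset.univ.filter (fun i : Fin n => φ (nxt i) ≠ φ i)).card = k)

/-- Two loops border each other: they are obtained by walking round the same simple
edge-cycle `γ` in the two different connected components of `∂P ∖ γ`. -/
def Borders (P : Set E3) {k₁ k₂ : ℕ} (L₁ : Fin k₁ → Set E3) (L₂ : Fin k₂ → Set E3) : Prop :=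
  ∃ γ C₁ C₂ : Set E3, IsCompOf C₁ (frontier P \ γ) ∧ IsCompOf C₂ (frontier P \ γ) ∧
    C₁ ≠ C₂ ∧ WalksRound P γ C₁ L₁ ∧ WalksRound P γ C₂ L₂

/-- A loop surrounds the facet `F` if it borders the `1`-loop `(F)`. -/
def Surrounds (P : Set E3) {k : ℕ} (L : Fin k → Set E3) (F : Set E3) : Prop :=
  IsFacetOf F P ∧ Borders P L (fun _ : Fin 1 => F)

/-- The number of edges of `P` lying in the facet `F` and in the set `γ`. -/
def edgesInCommon (P F γ : Set E3) : ℕ := {e | IsEdgeOf e P ∧ e ⊆ F ∧ e ⊆ γ}.ncard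
/-- A simple 3-polytope all of whose facets are pentagons and hexagons except for
at most one exceptional facet, which is a quadrangle or a heptagon. -/
def IsAlmostFullerene (P : Set E3) : Prop :=
  IsSimplePolytope3 P ∧
    (∀ F, IsFacetOf F P → facetEdges P F ∈ ({4, 5, 6, 7} : Set ℕ)) ∧
    {F | IsFacetOf F P ∧ (facetEdges P F = 4 ∨ facetEdges P F = 7)}.ncard ≤ 1

/-- The (combinatorial) dodecahedron: a simple 3-polytope with all facets pentagons. -/
def IsDodecahedron (P : Set E3) : Prop :=
  IsSimplePolytope3 P ∧ ∀ F, IsFacetOf F P → facetEdges P F = 5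

/-- `e` and `e'` are opposite edges of the hexagonal facet `H`: they are disjoint and no
edge of `H` meets both of them. -/
def OppositeEdges (P H e e' : Set E3) : Prop :=
  IsEdgeOf e P ∧ IsEdgeOf e' P ∧ e ⊆ H ∧ e' ⊆ H ∧ e ∩ e' = ∅ ∧
    ∀ e'', IsEdgeOf e'' P → e'' ⊆ H → (e'' ∩ e).Nonempty → e'' ≠ e → e'' ∩ e' = ∅

/-- A cap: a pentagonal facet `F₀` together with a surrounding 5-belt of pentagons. -/
def IsCapOf (P F₀ : Set E3) (L : Fin 5 → Set E3) : Prop :=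
  IsFacetOf F₀ P ∧ facetEdges P F₀ = 5 ∧ (∀ i, facetEdges P (L i) = 5) ∧
    IsBelt P L ∧ Surrounds P L F₀

/-- The number of 5-belts of `P` (counted as sets of facets). -/
def fiveBeltCount (P : Set E3) : ℕ :=
  {S : Set (Set E3) | ∃ B : Fin 5 → Set E3, IsBelt P B ∧ S = Set.range B}.ncard

/-- The structure of the `k`-th fullerene of Family I: two caps separated by `k`
hexagonal 5-belts, each bordering the next (for `k = 0` the caps border each other,
giving the dodecahedron). -/
def FamilyI (P : Set E3) (k : ℕ) : Prop :=
  ∃ (F₀ F₀' : Set E3) (L L' : Fin 5 → Set E3) (B : ℕ → Fin 5 → Set E3),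
    IsCapOf P F₀ L ∧ IsCapOf P F₀' L' ∧
    (∀ i < k, IsBelt P (B i) ∧ ∀ j, facetEdges P (B i j) = 6) ∧
    (∀ i, i + 1 < k → Borders P (B i) (B (i + 1))) ∧
    (0 < k → Borders P L (B 0) ∧ Borders P (B (k - 1)) L') ∧
    (k = 0 → Borders P L L') ∧
    facets P = {F₀, F₀'} ∪ Set.range L ∪ Set.range L' ∪ ⋃ i ∈ Set.Iio k, Set.range (B i)

/-- `P` is obtained from `Q` by an `(s,k;t₀,t₁)`-truncation with new edge `Enew`:
`P` is cut off from `Q` by a halfspace `{f ≤ c}` whose boundary plane crosses exactly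
two edges `E₀ ≠ E₁` of a `k`-gonal facet `F` of `Q`, cutting off exactly `s` vertices,
all belonging to `F`; `G₀` and `G₁` are the facets meeting `F` along `E₀` and `E₁`, and
they are `t₀`- and `t₁`-gons; `Enew` is the new edge dividing `F`. -/
def IsTruncation (s k t₀ t₁ : ℕ) (Q P Enew : Set E3) : Prop :=
  IsSimplePolytope3 Q ∧ IsSimplePolytope3 P ∧
    ∃ (F E₀ E₁ G₀ G₁ : Set E3) (f : E3 →ₗ[ℝ] ℝ) (c : ℝ),
      IsFacetOf F Q ∧ facetEdges Q F = k ∧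
      IsEdgeOf E₀ Q ∧ IsEdgeOf E₁ Q ∧ E₀ ≠ E₁ ∧ E₀ ⊆ F ∧ E₁ ⊆ F ∧
      IsFacetOf G₀ Q ∧ IsFacetOf G₁ Q ∧ G₀ ≠ F ∧ G₁ ≠ F ∧ E₀ ⊆ G₀ ∧ E₁ ⊆ G₁ ∧
      facetEdges Q G₀ = t₀ ∧ facetEdges Q G₁ = t₁ ∧
      P = Q ∩ {x | f x ≤ c} ∧
      (∀ e, IsEdgeOf e Q → (∃ x ∈ e, c < f x) → (∃ x ∈ e, f x < c) → e = E₀ ∨ e = E₁) ∧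
      (∃ x ∈ E₀, c < f x) ∧ (∃ x ∈ E₀, f x < c) ∧
      (∃ x ∈ E₁, c < f x) ∧ (∃ x ∈ E₁, f x < c) ∧
      (∀ v, IsVertexOf v Q → f v ≠ c) ∧
      {v | IsVertexOf v Q ∧ c < f v}.ncard = s ∧
      (∀ v, IsVertexOf v Q → c < f v → v ∈ F) ∧
      Enew = F ∩ {x | f x = c}

/-- Combinatorial equivalence of polytopes: an inclusion-preserving bijection
between the sets of faces. -/
def CombEquiv (P Q : Set E3) : Prop :=
  ∃ φ : {A : Set E3 // IsFaceOf A P} ≃ {A : Set E3 // IsFaceOf A Q},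
    ∀ A B : {A : Set E3 // IsFaceOf A P}, A.1 ⊆ B.1 ↔ (φ A).1 ⊆ (φ B).1

/-- Combinatorial equivalence sending the face `Ep` of `P` to the face `Eq` of `Q`. -/
def CombEquivMapping (P Q Ep Eq : Set E3) : Prop :=
  ∃ φ : {A : Set E3 // IsFaceOf A P} ≃ {A : Set E3 // IsFaceOf A Q},
    (∀ A B : {A : Set E3 // IsFaceOf A P}, A.1 ⊆ B.1 ↔ (φ A).1 ⊆ (φ B).1) ∧
    ∀ h : IsFaceOf Ep P, ((φ ⟨Ep, h⟩) : {A : Set E3 // IsFaceOf A Q}).1 = Eq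

/-- The straightening of `P` along the edge `E` is defined: `P` is combinatorially
obtained from some simple 3-polytope `Q` by an `(s,k)`-truncation whose new edge
corresponds to `E`. -/
def StraighteningDefined (P E : Set E3) : Prop :=
  ∃ (s k t₀ t₁ : ℕ) (Q P₁ E₁ : Set E3),
    IsTruncation s k t₀ t₁ Q P₁ E₁ ∧ CombEquivMapping P P₁ E E₁

/-- `P` is obtained from `Q` by one of the truncations
`(1;4,5)`, `(1;5,5)`, `(2,6;4,5)`, `(2,6;5,5)`, `(2,6;5,6)`, `(2,7;5,5)`, `(2,7;5,6)`. -/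
def FullereneStep (Q P : Set E3) : Prop :=
  ∃ (s k t₀ t₁ : ℕ) (Enew : Set E3), IsTruncation s k t₀ t₁ Q P Enew ∧
    ((s = 1 ∧ (({t₀, t₁} : Finset ℕ) = {4, 5} ∨ ({t₀, t₁} : Finset ℕ) = {5, 5})) ∨
     (s = 2 ∧ k = 6 ∧ (({t₀, t₁} : Finset ℕ) = {4, 5} ∨ ({t₀, t₁} : Finset ℕ) = {5, 5} ∨
        ({t₀, t₁} : Finset ℕ) = {5, 6})) ∨
     (s = 2 ∧ k = 7 ∧ (({t₀, t₁} : Finset ℕ) = {5, 5} ∨ ({t₀, t₁} : Finset ℕ) = {5, 6})))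



/-! ### Geometry of faces -/

/-- An extreme convex subset of full dimension is everything. -/
theorem ext_dim_eq {S A : Set E3} (hA : Convex ℝ A) (hne : A.Nonempty)
    (hext : IsExtreme ℝ S A) (hd : setDim A = setDim S) : A = S := by
  refine Subset.antisymm hext.subset ?_
  have hspan : vectorSpan ℝ A = vectorSpan ℝ S :=
    Submodule.eq_of_le_of_finrank_eq (vectorSpan_mono ℝ hext.subset) hd
  obtain ⟨x, hx⟩ := (intrinsicInterior_nonempty hA).2 hne
  have hxA : x ∈ A := intrinsicInterior_subset hx
  obtain ⟨x', hx', rfl⟩ := mem_intrinsicInterior.1 hx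
  intro z hz
  have hdir : (z - (x' : E3)) ∈ vectorSpan ℝ A := by
    rw [hspan]
    exact vsub_mem_vectorSpan ℝ hz (hext.subset hxA)
  have hmem : ∀ t : ℝ, (-t) • (z - (x' : E3)) +ᵥ (x' : E3) ∈ affineSpan ℝ A := by
    intro t
    refine AffineSubspace.vadd_mem_of_mem_direction ?_ x'.2
    rw [direction_affineSpan]
    exact Submodule.smul_mem _ _ hdir
  let g : ℝ → affineSpan ℝ A := fun t => ⟨_, hmem t⟩
  have hg : Continuous g := by
    refine Continuous.subtype_mk ?_ _
    simp only [vadd_eq_add]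
    fun_prop
  have hg0 : g 0 = x' := by
    apply Subtype.ext
    simp [g]
  have hev : ∀ᶠ t in nhds (0:ℝ), g t ∈ ((↑) ⁻¹' A : Set (affineSpan ℝ A)) := by
    apply hg.continuousAt
    rw [hg0]
    exact mem_interior_iff_mem_nhds.1 hx'
  obtain ⟨ε, hε, hball⟩ := Metric.eventually_nhds_iff.1 hev
  have h1 : g (ε/2) ∈ ((↑) ⁻¹' A : Set (affineSpan ℝ A)) := by
    apply hball
    simp only [dist_zero_right, Real.norm_eq_abs]
    rw [abs_of_pos (by linarith)]; linarith
  have h2 : (-(ε/2)) • (z - (x' : E3)) + (x' : E3) ∈ A := h1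
  refine hext.left_mem_of_mem_openSegment hz (hext.subset h2) hxA ?_
  refine ⟨(ε/2)/(1+ε/2), 1/(1+ε/2), by positivity, by positivity, ?_, ?_⟩
  · field_simp
    ring
  · have : (1 + ε/2) ≠ 0 := by positivity
    have e : ∀ (a : ℝ) (z x : E3), a ≠ -1 →
        (a/(1+a)) • z + (1/(1+a)) • ((-a) • (z - x) + x) = x := by
      intro a z x ha
      have : 1 + a ≠ 0 := fun h => ha (by linarith)
      ext i
      simp only [PiLp.add_apply, PiLp.smul_apply, PiLp.sub_apply, smul_eq_mul]
      field_simp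
      ring
    exact e _ _ _ (by linarith)

theorem setDim_mono {A B : Set E3} (h : A ⊆ B) : setDim A ≤ setDim B :=
  Submodule.finrank_mono (vectorSpan_mono ℝ h)

theorem IsFaceOf.subset' {F P : Set E3} (h : IsFaceOf F P) : F ⊆ P := h.2.2.2.subset

theorem IsFaceOf.inter' {F G P : Set E3} (h : IsFaceOf F P) (h' : IsFaceOf G P)
    (hne : (F ∩ G).Nonempty) : IsFaceOf (F ∩ G) P :=
  ⟨hne, h.2.1.inter h'.2.1, h.2.2.1.inter h'.2.2.1, h.2.2.2.inter h'.2.2.2⟩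

theorem face_eq_of_dim {F G P : Set E3} (h : IsFaceOf F P) (h' : IsFaceOf G P) (hs : F ⊆ G)
    (hd : setDim G ≤ setDim F) : F = G :=
  ext_dim_eq h.2.2.1 h.1 (h.2.2.2.mono h'.subset' hs) (le_antisymm (setDim_mono hs) hd)

/-- Two different facets which contain a common edge meet exactly in that edge. -/
theorem facet_inter_eq {F G e P : Set E3} (hF : IsFacetOf F P) (hG : IsFacetOf G P) (hne : F ≠ G)
    (he : IsEdgeOf e P) (h1 : e ⊆ F) (h2 : e ⊆ G) : F ∩ G = e := by
  have hface := hF.1.inter' hG.1 (he.1.1.mono (subset_inter h1 h2))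
  by_cases hd : setDim (F ∩ G) ≤ 1
  · exact (face_eq_of_dim he.1 hface (subset_inter h1 h2) (by rw [he.2]; exact hd)).symm
  · exfalso
    have hF2 := face_eq_of_dim hface hF.1 inter_subset_left (by rw [hF.2]; omega)
    have hG2 := face_eq_of_dim hface hG.1 inter_subset_right (by rw [hG.2]; omega)
    exact hne (hF2.symm.trans hG2)

theorem edge_unique {F G e e' P : Set E3} (hF : IsFacetOf F P) (hG : IsFacetOf G P) (hne : F ≠ G)
    (he : IsEdgeOf e P) (h1 : e ⊆ F) (h2 : e ⊆ G) (he' : IsEdgeOf e' P)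
    (h1' : e' ⊆ F) (h2' : e' ⊆ G) : e = e' :=
  (facet_inter_eq hF hG hne he h1 h2).symm.trans (facet_inter_eq hF hG hne he' h1' h2')

/-- Two different edges meet in at most one point, and it is a vertex. -/
theorem edge_inter_dim {e e' P : Set E3} (he : IsEdgeOf e P) (he' : IsEdgeOf e' P) (hne : e ≠ e')
    (hn : (e ∩ e').Nonempty) : setDim (e ∩ e') = 0 := by
  by_contra hd
  have hface := he.1.inter' he'.1 hn
  have hF2 := face_eq_of_dim hface he.1 inter_subset_left (by rw [he.2]; omega)
  have hG2 := face_eq_of_dim hface he'.1 inter_subset_right (by rw [he'.2]; omega)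
  exact hne (hF2.symm.trans hG2)

theorem subsingleton_of_dim {A : Set E3} (h : setDim A = 0) : A.Subsingleton := by
  have h0 : vectorSpan ℝ A = ⊥ := Submodule.finrank_eq_zero.1 h
  exact (vectorSpan_eq_bot_iff_subsingleton ℝ).1 h0

theorem edge_inter_subsingleton {e e' P : Set E3} (he : IsEdgeOf e P) (he' : IsEdgeOf e' P)
    (hne : e ≠ e') : (e ∩ e').Subsingleton := by
  intro x hx
  exact subsingleton_of_dim (edge_inter_dim he he' hne ⟨x, hx⟩) hx

theorem edge_inter_vertex {e e' P : Set E3} {x : E3} (he : IsEdgeOf e P) (he' : IsEdgeOf e' P)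
    (hne : e ≠ e') (hx : x ∈ e) (hx' : x ∈ e') : IsVertexOf x P := by
  have h := he.1.inter' he'.1 ⟨x, hx, hx'⟩
  have : e ∩ e' = {x} := (edge_inter_subsingleton he he' hne).eq_singleton_of_mem ⟨hx, hx'⟩
  rw [this] at h
  exact h

theorem vertex_openSegment {x a b : E3} {P : Set E3} (hx : IsVertexOf x P) (ha : a ∈ P) (hb : b ∈ P)
    (h : x ∈ openSegment ℝ a b) : a = x :=
  hx.2.2.2.left_mem_of_mem_openSegment ha hb rfl h

theorem vertex_mem_segment {x a b : E3} {P : Set E3} (hx : IsVertexOf x P) (ha : a ∈ P) (hb : b ∈ P)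
    (h : x ∈ segment ℝ a b) : x = a ∨ x = b := by
  rw [← insert_endpoints_openSegment] at h
  rcases h with h | h | h
  · exact Or.inl h
  · exact Or.inr h
  · exact Or.inl (vertex_openSegment hx ha hb h).symm

theorem vertex_mem {x : E3} {P : Set E3} (hx : IsVertexOf x P) : x ∈ P := hx.subset' rfl

theorem edge_eq_segment {e P : Set E3} {a b : E3} (he : IsEdgeOf e P) (ha : IsVertexOf a P)
    (hb : IsVertexOf b P) (hab : a ≠ b) (hae : a ∈ e) (hbe : b ∈ e) : e = segment ℝ a b := by
  refine Subset.antisymm ?_ (he.1.2.2.1.segment_subset hae hbe)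
  intro z hz
  have hcol : Collinear ℝ e := collinear_iff_finrank_le_one.2 he.2.le
  have hc : Collinear ℝ {a, z, b} := hcol.subset (by
    rintro y (rfl | rfl | rfl) <;> assumption)
  have hPz := he.1.subset' hz
  rcases hc.wbtw_or_wbtw_or_wbtw with h | h | h
  · exact h.mem_segment
  · rcases vertex_mem_segment hb hPz (vertex_mem ha) h.mem_segment with h | h
    · rw [← h]; exact right_mem_segment ℝ a b
    · exact absurd h.symm hab
  · rcases vertex_mem_segment ha (vertex_mem hb) hPz h.mem_segment with h | h
    · exact absurd h hab
    · rw [← h]; exact left_mem_segment ℝ a b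

/-- A face is the convex hull of the points of `V` in it. -/
theorem face_eq_hull {V : Finset E3} {F : Set E3}
    (hF : IsFaceOf F (convexHull ℝ (V : Set E3))) :
    F = convexHull ℝ ((V : Set E3) ∩ F) := by
  refine Subset.antisymm ?_ (convexHull_min inter_subset_right hF.2.2.1)
  intro x hx
  have hxP := hF.subset' hx
  rw [Finset.mem_convexHull'] at hxP
  obtain ⟨w, hw0, hw1, hwx⟩ := hxP
  have key : ∀ y ∈ V, w y ≠ 0 → y ∈ F := by
    intro y hy hwy
    have hpos : 0 < w y := lt_of_le_of_ne (hw0 y hy) (Ne.symm hwy)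
    have hsum : w y + ∑ z ∈ V.erase y, w z = 1 := by
      rw [Finset.add_sum_erase V w hy, hw1]
    have hsumx : w y • y + ∑ z ∈ V.erase y, w z • z = x := by
      rw [Finset.add_sum_erase V (fun z => w z • z) hy, hwx]
    have hr0 : ∀ z ∈ V.erase y, 0 ≤ w z := fun z hz => hw0 z (Finset.mem_of_mem_erase hz)
    rcases (Finset.sum_nonneg hr0).eq_or_lt with h0 | h0
    · have hz := (Finset.sum_eq_zero_iff_of_nonneg hr0).1 h0.symm
      have : ∑ z ∈ V.erase y, w z • z = 0 := Finset.sum_eq_zero (fun z hz' => by rw [hz z hz', zero_smul])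
      rw [this] at hsumx
      have : w y = 1 := by linarith
      rw [this, one_smul, add_zero] at hsumx
      rw [hsumx]; exact hx
    · have hcm : (V.erase y).centerMass w id ∈ convexHull ℝ (V : Set E3) := by
        apply Finset.centerMass_mem_convexHull _ hr0 h0
        intro z hz
        exact Finset.mem_of_mem_erase hz
      refine hF.2.2.2.left_mem_of_mem_openSegment (subset_convexHull ℝ _ hy) hcm hx ?_
      refine ⟨w y, ∑ z ∈ V.erase y, w z, hpos, h0, hsum, ?_⟩
      rw [Finset.centerMass, smul_smul, mul_inv_cancel₀ h0.ne', one_smul]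
      exact hsumx
  classical
  have hx2 : x = ∑ y ∈ V.filter (fun y => w y ≠ 0), w y • y := by
    rw [← hwx]
    symm
    apply Finset.sum_subset (Finset.filter_subset _ _)
    intro y hy hy'
    simp only [Finset.mem_filter, not_and, not_not] at hy'
    rw [hy' hy, zero_smul]
  rw [hx2]
  refine (convex_convexHull ℝ _).sum_mem (fun y hy => hw0 y (Finset.mem_filter.1 hy).1) ?_ ?_
  · rw [← hw1]
    apply Finset.sum_subset (Finset.filter_subset _ _)
    intro y hy hy'
    simp only [Finset.mem_filter, not_and, not_not] at hy'
    exact hy' hy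
  · intro y hy
    obtain ⟨h1, h2⟩ := Finset.mem_filter.1 hy
    exact subset_convexHull ℝ _ ⟨h1, key y h1 h2⟩

theorem faces_finite {P : Set E3} (hP : IsPolytope P) : {F | IsFaceOf F P}.Finite := by
  obtain ⟨V, rfl⟩ := hP
  have : {F | IsFaceOf F (convexHull ℝ (V : Set E3))} ⊆
      (fun S => convexHull ℝ S) '' (𝒫 (V : Set E3)) := by
    intro F hF
    exact ⟨(V : Set E3) ∩ F, inter_subset_left, (face_eq_hull hF).symm⟩
  exact (V.finite_toSet.finite_subsets.image _).subset this

theorem comp_disjoint {A C D : Set E3} (hC : IsCompOf C A) (hD : IsCompOf D A) (hne : C ≠ D) :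
    Disjoint C D := by
  rw [Set.disjoint_left]
  rintro z hz hz'
  obtain ⟨x, hx, rfl⟩ := hC
  obtain ⟨y, hy, rfl⟩ := hD
  exact hne ((connectedComponentIn_eq hz).trans (connectedComponentIn_eq hz').symm)

/-! ### Cyclic indices -/

theorem nxt_val {n : ℕ} (i : Fin n) : (nxt i).1 = if i.1 + 1 = n then 0 else i.1 + 1 := by
  have := i.2
  simp only [nxt]
  split_ifs with h
  · rw [h, Nat.mod_self]
  · exact Nat.mod_eq_of_lt (by omega)

theorem nxt_injective {n : ℕ} : Function.Injective (nxt : Fin n → Fin n) := by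
  intro i j h
  have h' := congrArg Fin.val h
  rw [nxt_val, nxt_val] at h'
  have := i.2
  have := j.2
  apply Fin.ext
  split_ifs at h' <;> omega

theorem nxt_surjective {n : ℕ} : Function.Surjective (nxt : Fin n → Fin n) :=
  Finite.surjective_of_injective nxt_injective

theorem nxt_ne {n : ℕ} (hn : 2 ≤ n) (i : Fin n) : nxt i ≠ i := by
  intro h
  have h' := congrArg Fin.val h
  rw [nxt_val] at h'
  have := i.2
  split_ifs at h' <;> omega

theorem nxt_nxt_ne {n : ℕ} (hn : 3 ≤ n) (i : Fin n) : nxt (nxt i) ≠ i := by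
  intro h
  have h' := congrArg Fin.val h
  rw [nxt_val, nxt_val] at h'
  have := i.2
  split_ifs at h' <;> omega

theorem nxt_closed {n : ℕ} (p : Fin n → Prop) (h : ∀ i, p i → p (nxt i)) (i : Fin n) (hi : p i) :
    ∀ j, p j := by
  have hn := i.2
  have step : ∀ k : ℕ, p ⟨(i.1 + k) % n, Nat.mod_lt _ (by omega)⟩ := by
    intro k
    induction k with
    | zero =>
      have e : (⟨(i.1 + 0) % n, Nat.mod_lt _ (by omega)⟩ : Fin n) = i := by
        apply Fin.ext
        simp [Nat.mod_eq_of_lt i.2]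
      rw [e]; exact hi
    | succ k ih =>
      have e : (⟨(i.1 + (k+1)) % n, Nat.mod_lt _ (by omega)⟩ : Fin n)
          = nxt ⟨(i.1 + k) % n, Nat.mod_lt _ (by omega)⟩ := by
        apply Fin.ext
        simp [nxt, Nat.add_assoc]
      rw [e]; exact h _ ih
  intro j
  have e : (⟨(i.1 + (n - i.1 + j.1)) % n, Nat.mod_lt _ (by omega)⟩ : Fin n) = j := by
    apply Fin.ext
    have hj := j.2
    have : i.1 + (n - i.1 + j.1) = j.1 + n := by omega
    simp only [this, Nat.add_mod_right]
    exact Nat.mod_eq_of_lt hj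
  rw [← e]; exact step _

theorem nxt4 (d : Fin 4) : nxt d = d + 1 := by
  revert d; decide

/-- In a turn of length four each value is left exactly once. -/
theorem turn_unique {n : ℕ} (φ : Fin n → Fin 4)
    (hstep : ∀ i, φ (nxt i) = φ i ∨ φ (nxt i) = nxt (φ i)) (hs : Function.Surjective φ)
    (hc : (Finset.univ.filter (fun i : Fin n => φ (nxt i) ≠ φ i)).card = 4) :
    (∀ d, ∃ i, φ i = d ∧ φ (nxt i) = nxt d) ∧
      (∀ i j, φ (nxt i) ≠ φ i → φ (nxt j) ≠ φ j → φ i = φ j → i = j) := by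
  have h1 : ∀ d, ∃ i, φ i = d ∧ φ (nxt i) = nxt d := by
    intro d
    by_contra hcon
    push Not at hcon
    obtain ⟨i, hi⟩ := hs d
    obtain ⟨j, hj⟩ := hs (nxt d)
    have hall := nxt_closed (fun i => φ i = d) (by
      intro i hi
      rcases hstep i with h | h
      · rw [h]; exact hi
      · rw [hi] at h
        exact absurd h (hcon i hi)) i hi j
    exact nxt_ne (by norm_num) d (hj.symm.trans hall)
  refine ⟨h1, ?_⟩
  have hinj := Finset.injOn_of_surjOn_of_card_le
    (s := Finset.univ.filter (fun i : Fin n => φ (nxt i) ≠ φ i)) (t := Finset.univ) φ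
    (fun _ _ => by simp) (by
      intro d _
      obtain ⟨i, hi, hi'⟩ := h1 d
      refine ⟨i, ?_, hi⟩
      simp only [Finset.coe_filter, Finset.mem_univ, true_and, mem_ofPred_eq]
      rw [hi, hi']
      exact nxt_ne (by norm_num) d) (by rw [hc]; simp)
  intro i j hi hj hij
  exact hinj (by simpa using hi) (by simpa using hj) hij

/-! ### Simple edge cycles -/

section Cycle

variable {P γ : Set E3} {n : ℕ} {v : Fin n → E3}

theorem cyc_mem (h : IsSimpleEdgeCycleVia P γ v) {i j : Fin n}
    (hm : v j ∈ segment ℝ (v i) (v (nxt i))) : j = i ∨ j = nxt i := by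
  rcases vertex_mem_segment (h.2.2.1 j) (vertex_mem (h.2.2.1 i)) (vertex_mem (h.2.2.1 _)) hm with
    h' | h'
  · exact Or.inl (h.2.1 h')
  · exact Or.inr (h.2.1 h')

theorem cyc_seg_inj (h : IsSimpleEdgeCycleVia P γ v) {i j : Fin n}
    (he : segment ℝ (v i) (v (nxt i)) = segment ℝ (v j) (v (nxt j))) : i = j := by
  have h1 : v i ∈ segment ℝ (v j) (v (nxt j)) := by rw [← he]; exact left_mem_segment _ _ _
  have h2 : v (nxt i) ∈ segment ℝ (v j) (v (nxt j)) := by rw [← he]; exact right_mem_segment _ _ _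
  rcases cyc_mem h h1 with h1 | h1
  · exact h1
  rcases cyc_mem h h2 with h2 | h2
  · rw [h1] at h2
    exact absurd h2 (nxt_nxt_ne h.1 j)
  · exact nxt_injective h2

theorem cyc_seg_sub (h : IsSimpleEdgeCycleVia P γ v) (i : Fin n) :
    segment ℝ (v i) (v (nxt i)) ⊆ γ := by
  rw [h.2.2.2.2]
  exact subset_iUnion (fun i => segment ℝ (v i) (v (nxt i))) i

theorem edge_infinite {e : Set E3} (he : IsEdgeOf e P) : e.Infinite := by
  have hns : ¬ e.Subsingleton := by
    intro hs
    have h0 := (vectorSpan_eq_bot_iff_subsingleton ℝ).2 hs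
    have := he.2
    rw [setDim, h0] at this
    simp at this
  rw [Set.not_subsingleton_iff] at hns
  exact he.1.2.2.1.isPreconnected.infinite_of_nontrivial hns

theorem cyc_edge (h : IsSimpleEdgeCycleVia P γ v) {e : Set E3} (he : IsEdgeOf e P) (hs : e ⊆ γ) :
    ∃ i, e = segment ℝ (v i) (v (nxt i)) := by
  by_contra hcon
  push Not at hcon
  refine edge_infinite he ?_
  have : e ⊆ ⋃ i, (e ∩ segment ℝ (v i) (v (nxt i))) := by
    intro x hx
    have hx' := hs hx
    rw [h.2.2.2.2] at hx'
    obtain ⟨i, hi⟩ := mem_iUnion.1 hx'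
    exact mem_iUnion.2 ⟨i, hx, hi⟩
  exact (finite_iUnion (fun i =>
    (edge_inter_subsingleton he (h.2.2.2.1 i) (hcon i)).finite)).subset this

theorem cyc_vertex (h : IsSimpleEdgeCycleVia P γ v) {x : E3} (hx : IsVertexOf x P) (hs : x ∈ γ) :
    ∃ i, x = v (nxt i) := by
  rw [h.2.2.2.2] at hs
  obtain ⟨i, hi⟩ := mem_iUnion.1 hs
  rcases vertex_mem_segment hx (vertex_mem (h.2.2.1 i)) (vertex_mem (h.2.2.1 _)) hi with h' | h'
  · obtain ⟨j, rfl⟩ := nxt_surjective i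
    exact ⟨j, h'⟩
  · exact ⟨i, h'⟩

theorem cyc_cover (h : IsSimpleEdgeCycleVia P γ v) :
    ∀ x ∈ γ, ∃ e, IsEdgeOf e P ∧ x ∈ e ∧ e ⊆ γ := by
  intro x hx
  have hx' := hx
  rw [h.2.2.2.2] at hx'
  obtain ⟨i, hi⟩ := mem_iUnion.1 hx'
  exact ⟨_, h.2.2.2.1 i, hi, cyc_seg_sub h i⟩

end Cycle

/-! ### Polygons -/

section Polygon

variable {P K : Set E3} {w a b : E3}

theorem cone_indep (hw : IsVertexOf w P) (ha : IsVertexOf a P) (hb : IsVertexOf b P)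
    (hwa : w ≠ a) (hwb : w ≠ b)
    (h1 : IsEdgeOf (segment ℝ w a) P) (h2 : IsEdgeOf (segment ℝ w b) P)
    (hne : segment ℝ w a ≠ segment ℝ w b) : LinearIndependent ℝ ![a - w, b - w] := by
  rw [LinearIndependent.pair_iff' (sub_ne_zero.2 hwa.symm)]
  intro t ht
  have hsub := edge_inter_subsingleton h1 h2 hne
  have hcol : Collinear ℝ {w, a, b} := by
    rw [collinear_iff_of_mem (p₀ := w) (by simp)]
    refine ⟨a - w, ?_⟩
    rintro p (rfl | rfl | rfl)
    · exact ⟨0, by simp⟩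
    · exact ⟨1, by simp⟩
    · exact ⟨t, by simp [ht]⟩
  have hw' : w ∈ segment ℝ w a ∩ segment ℝ w b := ⟨left_mem_segment _ _ _, left_mem_segment _ _ _⟩
  rcases hcol.wbtw_or_wbtw_or_wbtw with h | h | h
  · exact hwa (hsub hw' ⟨right_mem_segment _ _ _, h.mem_segment⟩)
  · refine hwb (hsub hw' ⟨?_, right_mem_segment _ _ _⟩)
    rw [segment_symm]; exact h.mem_segment
  · rcases vertex_mem_segment hw (vertex_mem hb) (vertex_mem ha) h.mem_segment with h | h
    · exact hwb h
    · exact hwa h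

theorem cone_sign (hK : Convex ℝ K) (hKP : K ⊆ P)
    (hw : IsVertexOf w P) (hwa : w ≠ a) (hwb : w ≠ b)
    (h1 : IsEdgeOf (segment ℝ w a) P) (h2 : IsEdgeOf (segment ℝ w b) P)
    (hne : segment ℝ w a ≠ segment ℝ w b) (hwK : w ∈ K) (haK : a ∈ K) (hbK : b ∈ K)
    {x : E3} (hx : x ∈ K) {α β : ℝ} (hxe : x = w + α • (a - w) + β • (b - w)) : 0 ≤ α := by
  by_contra hα
  push Not at hα
  have hsub := edge_inter_subsingleton h1 h2 hne
  have h1α : 0 < 1 - α := by linarith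
  set r : ℝ := (1/(1-α)) * β with hr
  -- the point where the segment from `x` to `a` meets the line `w b`
  have hy : w + r • (b - w) = (1/(1-α)) • x + (-α/(1-α)) • a := by
    rw [hxe, hr]
    ext i
    simp only [PiLp.add_apply, PiLp.smul_apply, PiLp.sub_apply, smul_eq_mul]
    field_simp
    ring
  have hyK : w + r • (b - w) ∈ K := by
    rw [hy]
    refine hK hx haK (by positivity) (div_nonneg (by linarith) h1α.le) ?_
    field_simp
    ring
  rcases lt_or_ge r 0 with hr0 | hr0
  · have hm : w ∈ openSegment ℝ b (w + r • (b - w)) := by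
      refine ⟨(-r)/(1-r), 1/(1-r), div_pos (by linarith) (by linarith),
        div_pos one_pos (by linarith), ?_, ?_⟩
      · have : 1 - r ≠ 0 := by linarith
        field_simp
        ring
      · have : 1 - r ≠ 0 := by linarith
        ext i
        simp only [PiLp.add_apply, PiLp.smul_apply, PiLp.sub_apply, smul_eq_mul]
        field_simp
        ring
    exact hwb (vertex_openSegment hw (hKP hbK) (hKP hyK) hm).symm
  · set δ : ℝ := 1/(1+r) with hδ
    have hδ0 : 0 < δ := by positivity
    have hδ1 : δ ≤ 1 := by
      rw [hδ, div_le_one (by linarith)]; linarith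
    have hδr : δ * r ≤ 1 := by
      rw [hδ, one_div, inv_mul_le_iff₀ (by linarith)]; linarith
    have hin : ∀ z ∈ K, w + δ • (z - w) ∈ K := by
      intro z hz
      have := hK hwK hz (a := 1 - δ) (b := δ) (by linarith) hδ0.le (by ring)
      convert this using 1
      module
    have hpt : w + (δ * r) • (b - w) ∈ segment ℝ w b := by
      refine ⟨1 - δ * r, δ * r, by linarith, by positivity, by ring, ?_⟩
      module
    have ha' : w + δ • (a - w) ∈ segment ℝ w b := by
      refine h2.1.2.2.2.left_mem_of_mem_openSegment (hKP (hin a haK)) (hKP (hin x hx)) hpt ?_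
      refine ⟨-α/(1-α), 1/(1-α), div_pos (by linarith) h1α, by positivity, ?_, ?_⟩
      · field_simp
        ring
      · rw [hxe, hr]
        ext i
        simp only [PiLp.add_apply, PiLp.smul_apply, PiLp.sub_apply, smul_eq_mul]
        field_simp
        ring
    have ha'' : w + δ • (a - w) ∈ segment ℝ w a := by
      refine ⟨1 - δ, δ, by linarith, by positivity, by ring, ?_⟩
      module
    have := hsub ⟨left_mem_segment _ _ _, left_mem_segment _ _ _⟩ ⟨ha'', ha'⟩
    have h0 : δ • (a - w) = 0 := by
      have h' : w + δ • (a - w) = w + 0 := by rw [← this, add_zero]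
      exact add_left_cancel h'
    rcases smul_eq_zero.1 h0 with h | h
    · exact hδ0.ne' h
    · exact hwa (sub_eq_zero.1 h).symm

theorem cone_rep (hK : IsFacetOf K P)
    (hw : IsVertexOf w P) (ha : IsVertexOf a P) (hb : IsVertexOf b P) (hwa : w ≠ a) (hwb : w ≠ b)
    (h1 : IsEdgeOf (segment ℝ w a) P) (h2 : IsEdgeOf (segment ℝ w b) P)
    (hne : segment ℝ w a ≠ segment ℝ w b) (hwK : w ∈ K) (haK : a ∈ K) (hbK : b ∈ K)
    {x : E3} (hx : x ∈ K) :
    ∃ α β : ℝ, 0 ≤ α ∧ 0 ≤ β ∧ x = w + α • (a - w) + β • (b - w) := by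
  have hli := cone_indep hw ha hb hwa hwb h1 h2 hne
  have hle : Submodule.span ℝ {a - w, b - w} ≤ vectorSpan ℝ K := by
    rw [Submodule.span_le]
    rintro y (rfl | rfl)
    · exact vsub_mem_vectorSpan ℝ haK hwK
    · exact vsub_mem_vectorSpan ℝ hbK hwK
  have hfr : Module.finrank ℝ (Submodule.span ℝ {a - w, b - w}) = 2 := by
    have := finrank_span_eq_card hli
    rw [Matrix.range_cons_cons_empty] at this
    simpa using this
  have heq := Submodule.eq_of_le_of_finrank_eq hle (hfr.trans hK.2.symm)
  have hxm : x - w ∈ Submodule.span ℝ {a - w, b - w} := by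
    rw [heq]; exact vsub_mem_vectorSpan ℝ hx hwK
  obtain ⟨α, β, hαβ⟩ := Submodule.mem_span_pair.1 hxm
  have hxe : x = w + α • (a - w) + β • (b - w) := by
    rw [add_assoc, hαβ]; abel
  refine ⟨α, β, ?_, ?_, hxe⟩
  · exact cone_sign hK.1.2.2.1 hK.1.subset' hw hwa hwb h1 h2 hne hwK haK hbK hx hxe
  · exact cone_sign hK.1.2.2.1 hK.1.subset' hw hwb hwa h2 h1 hne.symm hwK hbK haK hx
      (by rw [hxe]; abel)

/-- Every edge of a polygon is cut out by a supporting line. -/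
theorem edge_support {g : Set E3} (hK : IsFacetOf K P) (hg : IsEdgeOf g P) (hgK : g ⊆ K) :
    ∃ (f : E3 →ₗ[ℝ] ℝ) (c : ℝ), (∀ y ∈ K, f y ≤ c) ∧ (∀ y ∈ K, f y = c ↔ y ∈ g) := by
  obtain ⟨m, hm⟩ := hg.1.1
  have hextK : IsExtreme ℝ K g := hg.1.2.2.2.mono hK.1.subset' hgK
  have hz : ∃ z ∈ K, z - m ∉ vectorSpan ℝ g := by
    by_contra hcon
    push Not at hcon
    have : vectorSpan ℝ K ≤ vectorSpan ℝ g := by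
      rw [vectorSpan_eq_span_vsub_set_right ℝ (hgK hm), Submodule.span_le]
      rintro _ ⟨z, hz, rfl⟩
      exact hcon z hz
    have h' := Submodule.finrank_mono this
    have e1 := hK.2
    have e2 := hg.2
    rw [setDim] at e1 e2
    omega
  obtain ⟨z0, hz0, hz0'⟩ := hz
  obtain ⟨f, hf1, hf2⟩ := Submodule.exists_le_ker_of_notMem hz0'
  have hfg : ∀ y ∈ g, f y = f m := by
    intro y hy
    have : f (y - m) = 0 := hf2 (vsub_mem_vectorSpan ℝ hy hm)
    rw [map_sub] at this
    linarith
  have hgeq : g = K ∩ {y | f y = f m} := by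
    have hsub : g ⊆ K ∩ {y | f y = f m} := fun y hy => ⟨hgK hy, hfg y hy⟩
    refine ext_dim_eq hg.1.2.2.1 hg.1.1 (hextK.mono inter_subset_left hsub) ?_
    refine le_antisymm (setDim_mono hsub) ?_
    rw [hg.2]
    have hlt : vectorSpan ℝ (K ∩ {y | f y = f m}) < vectorSpan ℝ K := by
      refine lt_of_le_of_ne (vectorSpan_mono ℝ inter_subset_left) ?_
      intro heq
      have hker : vectorSpan ℝ (K ∩ {y | f y = f m}) ≤ LinearMap.ker f := by
        rw [vectorSpan_eq_span_vsub_set_right ℝ (show m ∈ K ∩ {y | f y = f m} from ⟨hgK hm, rfl⟩),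
          Submodule.span_le]
        rintro _ ⟨z, hz, rfl⟩
        have := hz.2
        simp only [mem_ofPred_eq] at this
        simp [this]
      rw [heq] at hker
      exact hf1 (hker (vsub_mem_vectorSpan ℝ hz0 (hgK hm)))
    have := Submodule.finrank_lt_finrank_of_lt hlt
    have e1 := hK.2
    rw [setDim] at e1 ⊢
    omega
  have hmem : ∀ y ∈ K, f y = f m ↔ y ∈ g := by
    intro y hy
    refine ⟨fun h => ?_, hfg y⟩
    rw [hgeq]; exact ⟨hy, h⟩
  have hone : ∀ y ∈ K, ∀ z ∈ K, ¬ (f y < f m ∧ f m < f z) := by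
    rintro y hy z hz ⟨h1, h2⟩
    have hcv := hextK.convex_sdiff hK.1.2.2.1
    have hy' : y ∈ K \ g := ⟨hy, fun h => h1.ne (hfg y h)⟩
    have hz' : z ∈ K \ g := ⟨hz, fun h => h2.ne' (hfg z h)⟩
    have hd : 0 < f z - f y := by linarith
    have hp := hcv hy' hz' (a := (f z - f m)/(f z - f y)) (b := (f m - f y)/(f z - f y))
      (div_nonneg (by linarith) hd.le) (div_nonneg (by linarith) hd.le) (by field_simp; ring)
    refine hp.2 ((hmem _ hp.1).1 ?_)
    rw [map_add, map_smul, map_smul, smul_eq_mul, smul_eq_mul]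
    field_simp
    ring
  by_cases hle : ∀ y ∈ K, f y ≤ f m
  · exact ⟨f, f m, hle, hmem⟩
  · push Not at hle
    obtain ⟨z, hz, hz2⟩ := hle
    refine ⟨-f, -f m, ?_, ?_⟩
    · intro y hy
      have := hone y hy z hz
      simp only [LinearMap.neg_apply, neg_le_neg_iff]
      by_contra hh
      exact this ⟨not_le.1 hh, hz2⟩
    · intro y hy
      simp only [LinearMap.neg_apply, neg_inj]
      exact hmem y hy

/-- A closed edge cycle inside a polygon contains all the edges of the polygon. -/
theorem polygon_cycle {γ g : Set E3} {n : ℕ} {v : Fin n → E3} (hK : IsFacetOf K P)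
    (h : IsSimpleEdgeCycleVia P γ v) (hγK : γ ⊆ K) (hg : IsEdgeOf g P) (hgK : g ⊆ K) :
    ∃ i, g = segment ℝ (v i) (v (nxt i)) := by
  obtain ⟨f, c, hf1, hf2⟩ := edge_support hK hg hgK
  have hn := h.1
  have : Nonempty (Fin n) := ⟨⟨0, by omega⟩⟩
  obtain ⟨k, hk⟩ := Finite.exists_max (fun i => f (v i))
  obtain ⟨k', rfl⟩ := nxt_surjective k
  have hvK : ∀ i, v i ∈ K := fun i => hγK (cyc_seg_sub h i (left_mem_segment _ _ _))
  have hwa : v (nxt k') ≠ v (nxt (nxt k')) :=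
    fun e => nxt_ne (by omega) _ (h.2.1 e).symm
  have hwb : v (nxt k') ≠ v k' := fun e => nxt_ne (by omega) _ (h.2.1 e)
  have he2 : IsEdgeOf (segment ℝ (v (nxt k')) (v k')) P := by
    rw [segment_symm]; exact h.2.2.2.1 k'
  have hne : segment ℝ (v (nxt k')) (v (nxt (nxt k'))) ≠ segment ℝ (v (nxt k')) (v k') := by
    rw [segment_symm ℝ (v (nxt k')) (v k')]
    intro e
    exact nxt_ne (by omega) _ (cyc_seg_inj h e)
  have hrep := fun {x} (hx : x ∈ K) => cone_rep hK (h.2.2.1 _) (h.2.2.1 _) (h.2.2.1 _) hwa hwb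
    (h.2.2.2.1 (nxt k')) he2 hne (hvK _) (hvK _) (hvK _) hx
  have hka := hk (nxt (nxt k'))
  have hkb := hk k'
  have hval : ∀ α β : ℝ, f (v (nxt k') + α • (v (nxt (nxt k')) - v (nxt k')) +
      β • (v k' - v (nxt k'))) = f (v (nxt k')) + α * (f (v (nxt (nxt k'))) - f (v (nxt k'))) +
        β * (f (v k') - f (v (nxt k'))) := by
    intro α β
    simp only [map_add, map_smul, map_sub, smul_eq_mul]
  have hmax : ∀ x ∈ K, f x ≤ f (v (nxt k')) := by
    intro x hx
    obtain ⟨α, β, hα, hβ, rfl⟩ := hrep hx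
    rw [hval]
    nlinarith
  have hc : f (v (nxt k')) = c := by
    obtain ⟨m, hm⟩ := hg.1.1
    have := (hf2 m (hgK hm)).2 hm
    have h1 := hmax m (hgK hm)
    have h2 := hf1 _ (hvK (nxt k'))
    linarith
  have hwg : v (nxt k') ∈ g := (hf2 _ (hvK _)).1 hc
  obtain ⟨x, hxg, hxw⟩ := (edge_infinite hg).exists_notMem_finite (Set.finite_singleton (v (nxt k')))
  obtain ⟨α, β, hα, hβ, hxe⟩ := hrep (hgK hxg)
  have hfx := (hf2 x (hgK hxg)).2 hxg
  rw [hxe, hval, hc] at hfx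
  rw [hc] at hka hkb
  have close : ∀ y, IsEdgeOf (segment ℝ (v (nxt k')) y) P → y ∈ K → f y = c →
      g = segment ℝ (v (nxt k')) y := by
    intro y hy hyK hyc
    have hyg := (hf2 y hyK).1 hyc
    exact (face_eq_of_dim hy.1 hg.1 (hg.1.2.2.1.segment_subset hwg hyg)
      (by rw [hg.2, hy.2])).symm
  have e1 : α * (f (v (nxt (nxt k'))) - c) = 0 := by nlinarith
  have e2 : β * (f (v k') - c) = 0 := by nlinarith
  rcases mul_eq_zero.1 e1 with h0 | h0
  · rcases mul_eq_zero.1 e2 with h0' | h0'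
    · exfalso
      apply hxw
      rw [hxe, h0, h0']
      simp
    · refine ⟨k', ?_⟩
      rw [segment_symm]
      exact close _ he2 (hvK _) (by linarith)
  · exact ⟨nxt k', close _ (h.2.2.2.1 _) (hvK _) (by linarith)⟩

theorem polygon_count {γ : Set E3} {n : ℕ} {v : Fin n → E3} (hK : IsFacetOf K P)
    (h : IsSimpleEdgeCycleVia P γ v) (hγK : γ ⊆ K) : facetEdges P K = n := by
  have : {e | IsEdgeOf e P ∧ e ⊆ K} = Set.range (fun i => segment ℝ (v i) (v (nxt i))) := by
    ext e
    constructor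
    · rintro ⟨he, hs⟩
      obtain ⟨i, hi⟩ := polygon_cycle hK h hγK he hs
      exact ⟨i, hi.symm⟩
    · rintro ⟨i, rfl⟩
      exact ⟨h.2.2.2.1 i, (cyc_seg_sub h i).trans hγK⟩
  rw [facetEdges, this, ← Set.image_univ, Set.ncard_image_of_injective _ (fun i j e => cyc_seg_inj h e)]
  simp [Set.ncard_univ]

end Polygon

/-! ### The two walks round the same cycle -/

theorem four_facets {P : Set E3} (hP : IsSimplePolytope3 P) {x : E3} (hx : IsVertexOf x P)
    {F₁ F₂ F₃ F₄ : Set E3} (h1 : IsFacetOf F₁ P) (h2 : IsFacetOf F₂ P) (h3 : IsFacetOf F₃ P)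
    (h4 : IsFacetOf F₄ P) (x1 : x ∈ F₁) (x2 : x ∈ F₂) (x3 : x ∈ F₃) (x4 : x ∈ F₄)
    (h12 : F₁ ≠ F₂) (h13 : F₁ ≠ F₃) (h14 : F₁ ≠ F₄) (h23 : F₂ ≠ F₃) (h24 : F₂ ≠ F₄)
    (h34 : F₃ ≠ F₄) : False := by
  have hc := hP.2.2 x hx
  have hfin : {F | IsFacetOf F P ∧ x ∈ F}.Finite := by
    apply Set.finite_of_ncard_ne_zero
    omega
  have hsub : ({F₁, F₂, F₃, F₄} : Set (Set E3)) ⊆ {F | IsFacetOf F P ∧ x ∈ F} := by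
    rintro F (rfl | rfl | rfl | rfl)
    · exact ⟨h1, x1⟩
    · exact ⟨h2, x2⟩
    · exact ⟨h3, x3⟩
    · exact ⟨h4, x4⟩
  have hle := Set.ncard_le_ncard hsub hfin
  rw [Set.ncard_insert_of_notMem (by simp [h12, h13, h14]),
    Set.ncard_insert_of_notMem (by simp [h23, h24]), Set.ncard_pair h34] at hle
  omega

theorem loop_ne {P : Set E3} {L : Fin 4 → Set E3} (hL : IsLoop P L) (i : Fin 4) :
    L i ≠ L (i + 1) := by
  intro h
  have he := (hL.2.2 (by norm_num) i).2
  rw [nxt4, ← h, inter_self, (hL.2.1 i).2] at he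
  omega

theorem belt_inj {P : Set E3} {B : Fin 4 → Set E3} (hB : IsBelt P B) : Function.Injective B := by
  intro p q h
  by_contra hne
  have hn : (B p ∩ B q).Nonempty := by
    rw [← h, inter_self]
    exact (hB.2.1.2.1 p).1.1
  rcases (hB.2.2.2 le_rfl p q hne).1 hn with e | e
  · rw [nxt4] at e
    exact loop_ne hB.2.1 p (by rw [← e]; exact h)
  · rw [nxt4] at e
    exact loop_ne hB.2.1 q (by rw [← e]; exact h.symm)

/-- Everything we need about the two walks. -/
structure Ctx (P γ : Set E3) (B L : Fin 4 → Set E3) {n m : ℕ} (v : Fin n → E3) (w : Fin m → E3)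
    (φ : Fin n → Fin 4) (ψ : Fin m → Fin 4) (s : Fin 4 → Fin m) : Prop where
  hP : IsFlag3Polytope P
  hB : IsBelt P B
  hL : IsLoop P L
  hv : IsSimpleEdgeCycleVia P γ v
  hw : IsSimpleEdgeCycleVia P γ w
  vB : ∀ i, segment ℝ (v i) (v (nxt i)) ⊆ B (φ i)
  wL : ∀ i, segment ℝ (w i) (w (nxt i)) ⊆ L (ψ i)
  φstep : ∀ i, φ (nxt i) = φ i ∨ φ (nxt i) = φ i + 1
  ψstep : ∀ i, ψ (nxt i) = ψ i ∨ ψ (nxt i) = ψ i + 1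
  φcard : (Finset.univ.filter (fun i : Fin n => φ (nxt i) ≠ φ i)).card = 4
  ψcard : (Finset.univ.filter (fun i : Fin m => ψ (nxt i) ≠ ψ i)).card = 4
  φuniq : ∀ i j, φ (nxt i) ≠ φ i → φ (nxt j) ≠ φ j → φ i = φ j → i = j
  ψuniq : ∀ i j, ψ (nxt i) ≠ ψ i → ψ (nxt j) ≠ ψ j → ψ i = ψ j → i = j
  s1 : ∀ d, ψ (s d) = d
  s2 : ∀ d, ψ (nxt (s d)) = d + 1
  ne : ∀ i j, B i ≠ L j

namespace Ctx

variable {P γ : Set E3} {B L : Fin 4 → Set E3} {n m : ℕ} {v : Fin n → E3} {w : Fin m → E3}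
    {φ : Fin n → Fin 4} {ψ : Fin m → Fin 4} {s : Fin 4 → Fin m}

theorem fin4_ne (d : Fin 4) : d + 1 ≠ d := by revert d; decide

theorem fin4_ne2 (d : Fin 4) : d + 2 ≠ d := by revert d; decide

theorem fin4_add2 (d : Fin 4) : d + 1 + 1 = d + 2 := by revert d; decide

theorem fin4_add4 (d : Fin 4) : d + 2 + 2 = d := by revert d; decide

theorem nonchange (h : Ctx P γ B L v w φ ψ s) {j : Fin m} (hj : j ≠ s (ψ j)) :
    ψ (nxt j) = ψ j := by
  by_contra hne
  refine hj (h.ψuniq j (s (ψ j)) hne ?_ (h.s1 _).symm)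
  rw [h.s1, h.s2]
  exact fin4_ne _

/-- The vertices of the two descriptions of `γ` correspond, with the adjacent edges. -/
theorem corr (h : Ctx P γ B L v w φ ψ s) (i : Fin n) : ∃ j, v (nxt i) = w (nxt j) ∧
    ((segment ℝ (v i) (v (nxt i)) = segment ℝ (w j) (w (nxt j)) ∧
      segment ℝ (v (nxt i)) (v (nxt (nxt i))) = segment ℝ (w (nxt j)) (w (nxt (nxt j)))) ∨
     (segment ℝ (v i) (v (nxt i)) = segment ℝ (w (nxt j)) (w (nxt (nxt j))) ∧
      segment ℝ (v (nxt i)) (v (nxt (nxt i))) = segment ℝ (w j) (w (nxt j)))) := by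
  obtain ⟨j, hj⟩ := cyc_vertex h.hw (h.hv.2.2.1 (nxt i))
    (cyc_seg_sub h.hv i (right_mem_segment _ _ _))
  obtain ⟨k, hk⟩ := cyc_edge h.hw (h.hv.2.2.2.1 i) (cyc_seg_sub h.hv i)
  obtain ⟨k', hk'⟩ := cyc_edge h.hw (h.hv.2.2.2.1 (nxt i)) (cyc_seg_sub h.hv (nxt i))
  refine ⟨j, hj, ?_⟩
  have hkk : k ≠ k' := by
    rintro rfl
    have hn := h.hv.1
    exact nxt_ne (by omega) i (cyc_seg_inj h.hv (hk.trans hk'.symm)).symm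
  have m1 : w (nxt j) ∈ segment ℝ (w k) (w (nxt k)) := by
    rw [← hk, ← hj]; exact right_mem_segment _ _ _
  have m2 : w (nxt j) ∈ segment ℝ (w k') (w (nxt k')) := by
    rw [← hk', ← hj]; exact left_mem_segment _ _ _
  rcases cyc_mem h.hw m1 with c1 | c1 <;> rcases cyc_mem h.hw m2 with c2 | c2
  · exact absurd (c1.symm.trans c2) hkk
  · right
    have := nxt_injective c2
    subst this
    subst c1
    exact ⟨hk, hk'⟩
  · left
    have := nxt_injective c1
    subst this
    subst c2
    exact ⟨hk, hk'⟩
  · exact absurd (nxt_injective (c1.symm.trans c2)) hkk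

theorem corr_change (h : Ctx P γ B L v w φ ψ s) (i : Fin n) : ∃ j, v (nxt i) = w (nxt j) ∧
    (φ (nxt i) = φ i → ψ (nxt j) ≠ ψ j) := by
  obtain ⟨j, hj, hc⟩ := h.corr i
  refine ⟨j, hj, fun h1 h2 => ?_⟩
  have b1 := h.vB i
  have b2 := h.vB (nxt i)
  rw [h1] at b2
  have l1 := h.wL j
  have l2 := h.wL (nxt j)
  rw [h2] at l2
  have hn := h.hv.1
  refine nxt_ne (by omega) i (cyc_seg_inj h.hv ?_).symm
  rcases hc with ⟨e1, e2⟩ | ⟨e1, e2⟩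
  · rw [← e1] at l1
    rw [← e2] at l2
    exact edge_unique (h.hB.2.1.2.1 _) (h.hL.2.1 _) (h.ne _ _) (h.hv.2.2.2.1 i) b1 l1
      (h.hv.2.2.2.1 _) b2 l2
  · rw [← e2] at l1
    rw [← e1] at l2
    exact edge_unique (h.hB.2.1.2.1 _) (h.hL.2.1 _) (h.ne _ _) (h.hv.2.2.2.1 i) b1 l2
      (h.hv.2.2.2.1 _) b2 l1

theorem card_le (h : Ctx P γ B L v w φ ψ s) : m ≤ 8 := by
  have hmn : m ≤ n := by
    have hk : ∀ j : Fin m, ∃ k : Fin n, segment ℝ (w j) (w (nxt j)) = segment ℝ (v k) (v (nxt k)) :=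
      fun j => cyc_edge h.hv (h.hw.2.2.2.1 j) (cyc_seg_sub h.hw j)
    choose g hg using hk
    have hinj : Function.Injective g := by
      intro i j hij
      refine cyc_seg_inj h.hw ?_
      rw [hg i, hg j, hij]
    simpa using Fintype.card_le_of_injective g hinj
  have hn : (Finset.univ.filter (fun i : Fin n => ¬ (φ (nxt i) ≠ φ i))).card ≤ 4 := by
    refine le_trans ?_ h.ψcard.le
    choose τ hτ1 hτ2 using h.corr_change
    refine Finset.card_le_card_of_injOn τ ?_ ?_
    · intro i hi
      simp only [ne_eq, not_not, Finset.coe_filter, Finset.mem_univ, true_and,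
        Set.mem_ofPred_eq] at hi ⊢
      exact hτ2 i hi
    · intro i _ j _ hij
      apply nxt_injective
      apply h.hv.2.1
      rw [hτ1, hτ1, hij]
  have hsum := Finset.card_filter_add_card_filter_not (s := (Finset.univ : Finset (Fin n)))
    (fun i : Fin n => φ (nxt i) ≠ φ i)
  rw [h.φcard, Finset.card_univ, Fintype.card_fin] at hsum
  omega

theorem belt_vertex (h : Ctx P γ B L v w φ ψ s) {x : E3} {i : Fin n} (hi : x = v (nxt i))
    {c : Fin 4} (h1 : x ∈ B c) (h2 : x ∈ B (c + 1)) : φ (nxt i) ≠ φ i ∧ φ i = c := by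
  obtain ⟨j, hj, hc⟩ := h.corr_change i
  have hx : IsVertexOf x P := by rw [hi]; exact h.hv.2.2.1 _
  have hBf := h.hB.2.1.2.1
  have hLf := h.hL.2.1
  have hBi := belt_inj h.hB
  have hl1 : x ∈ L (ψ j) := by rw [hi, hj]; exact h.wL j (right_mem_segment _ _ _)
  have hl2 : x ∈ L (ψ (nxt j)) := by rw [hi, hj]; exact h.wL (nxt j) (left_mem_segment _ _ _)
  have hb1 : x ∈ B (φ i) := by rw [hi]; exact h.vB i (right_mem_segment _ _ _)
  have hb2 : x ∈ B (φ (nxt i)) := by rw [hi]; exact h.vB (nxt i) (left_mem_segment _ _ _)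
  have hch : φ (nxt i) ≠ φ i := by
    intro hcon
    have hch := hc hcon
    rcases h.ψstep j with e | e
    · exact hch e
    · rw [e] at hl2
      exact four_facets h.hP.1 hx (hBf c) (hBf (c+1)) (hLf _) (hLf _) h1 h2 hl1 hl2
        (loop_ne h.hB.2.1 c) (h.ne _ _) (h.ne _ _) (h.ne _ _) (h.ne _ _) (loop_ne h.hL _)
  refine ⟨hch, ?_⟩
  have key : ∀ c', x ∈ B c' → c' = φ i ∨ c' = φ (nxt i) := by
    intro c' hc'
    by_contra hcon
    push Not at hcon
    exact four_facets h.hP.1 hx (hBf c') (hBf (φ i)) (hBf (φ (nxt i))) (hLf _) hc' hb1 hb2 hl1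
      (fun e => hcon.1 (hBi e)) (fun e => hcon.2 (hBi e)) (h.ne _ _)
      (fun e => hch (hBi e).symm) (h.ne _ _) (h.ne _ _)
  have k1 := key c h1
  have k2 := key (c+1) h2
  rcases h.φstep i with e | e
  · exact absurd e hch
  · rw [e] at k1 k2
    exact (by decide : ∀ c p : Fin 4, (c = p ∨ c = p + 1) → (c + 1 = p ∨ c + 1 = p + 1) → p = c) c (φ i) k1 k2

theorem belt_vertex_unique (h : Ctx P γ B L v w φ ψ s) {x y : E3} (hx : IsVertexOf x P)
    (hy : IsVertexOf y P) (hxγ : x ∈ γ) (hyγ : y ∈ γ) {c : Fin 4} (hx1 : x ∈ B c)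
    (hx2 : x ∈ B (c + 1)) (hy1 : y ∈ B c) (hy2 : y ∈ B (c + 1)) : x = y := by
  obtain ⟨i, hi⟩ := cyc_vertex h.hv hx hxγ
  obtain ⟨j, hj⟩ := cyc_vertex h.hv hy hyγ
  obtain ⟨i1, i2⟩ := h.belt_vertex hi hx1 hx2
  obtain ⟨j1, j2⟩ := h.belt_vertex hj hy1 hy2
  rw [hi, hj, h.φuniq i j i1 j1 (i2.trans j2.symm)]

/-- No two consecutive edges of the loop facets can bridge two adjacent belt facets. -/
theorem no_bridge (h : Ctx P γ B L v w φ ψ s) {F e e' : Set E3} {d c : Fin 4} {x : E3}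
    (hF : IsFacetOf F P) (hFB : ∀ i, B i ≠ F) (hFL : F ≠ L d) (he : IsEdgeOf e P)
    (he' : IsEdgeOf e' P) (hee : e ≠ e') (h1 : e ⊆ F) (h1' : e' ⊆ F) (h2 : e ⊆ B c)
    (h2' : e' ⊆ B (c + 1)) (heγ : e ⊆ γ) (hx : IsVertexOf x P) (hxγ : x ∈ γ) (hx1 : x ∈ B c)
    (hx2 : x ∈ B (c + 1)) (hxL : x ∈ L d) : False := by
  have hBf := h.hB.2.1.2.1
  have i1 : F ∩ B c = e := facet_inter_eq hF (hBf c) (hFB c).symm he h1 h2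
  have i2 : F ∩ B (c + 1) = e' := facet_inter_eq hF (hBf _) (hFB _).symm he' h1' h2'
  have i3 := h.hB.2.1.2.2 (by norm_num) c
  rw [nxt4] at i3
  have hne : (F ∩ B c ∩ B (c + 1)).Nonempty := by
    by_contra hcon
    rw [Set.not_nonempty_iff_eq_empty] at hcon
    refine h.hP.2.2 ![F, B c, B (c + 1)] ⟨le_rfl, ⟨by norm_num, ?_, ?_⟩, ?_, ?_⟩
    · intro i
      fin_cases i
      · exact hF
      · exact hBf _
      · exact hBf _
    · intro _ i
      fin_cases i
      · change IsEdgeOf (F ∩ B c) P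
        rw [i1]; exact he
      · exact i3
      · change IsEdgeOf (B (c + 1) ∩ F) P
        rw [inter_comm, i2]; exact he'
    · intro _ i
      fin_cases i
      · exact hcon
      · change B c ∩ B (c + 1) ∩ F = ∅
        rw [← hcon]; ext; simp only [mem_inter_iff]; tauto
      · change B (c + 1) ∩ F ∩ B c = ∅
        rw [← hcon]; ext; simp only [mem_inter_iff]; tauto
    · intro h34
      norm_num at h34
  obtain ⟨y, ⟨hyF, hyc⟩, hyc'⟩ := hne
  have hye : y ∈ e := by rw [← i1]; exact ⟨hyF, hyc⟩
  have hye' : y ∈ e' := by rw [← i2]; exact ⟨hyF, hyc'⟩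
  have hyv := edge_inter_vertex he he' hee hye hye'
  have := h.belt_vertex_unique hyv hx (heγ hye) hxγ hyc hyc' hx1 hx2
  subst this
  exact four_facets h.hP.1 hx hF (h.hL.2.1 d) (hBf c) (hBf (c + 1)) hyF hxL hx1 hx2
    hFL (hFB _).symm (hFB _).symm (h.ne _ _).symm (h.ne _ _).symm (loop_ne h.hB.2.1 c)

theorem arc_ge (h : Ctx P γ B L v w φ ψ s) {d : Fin 4} (hd : L d = L (d + 2)) :
    3 ≤ (Finset.univ.filter (fun j => ψ j = d + 1)).card := by
  have hb : ∀ j : Fin m, ∃ c, segment ℝ (w j) (w (nxt j)) ⊆ B c := by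
    intro j
    obtain ⟨k, hk⟩ := cyc_edge h.hv (h.hw.2.2.2.1 j) (cyc_seg_sub h.hw j)
    exact ⟨φ k, hk ▸ h.vB k⟩
  choose b hb using hb
  have hBf := h.hB.2.1.2.1
  have hLf := h.hL.2.1
  have hBi := belt_inj h.hB
  have hm := h.hw.1
  have bchange : ∀ d, b (nxt (s d)) = b (s d) := by
    intro d
    by_contra hcon
    refine four_facets h.hP.1 (h.hw.2.2.1 (nxt (s d))) (hBf (b (nxt (s d)))) (hBf (b (s d)))
      (hLf d) (hLf (d+1)) (hb _ (left_mem_segment _ _ _)) (hb _ (right_mem_segment _ _ _))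
      ?_ ?_ (fun e => hcon (hBi e)) (h.ne _ _) (h.ne _ _) (h.ne _ _) (h.ne _ _) (loop_ne h.hL d)
    · have := h.wL (s d) (right_mem_segment _ _ _)
      rwa [h.s1] at this
    · have := h.wL (nxt (s d)) (left_mem_segment _ _ _)
      rwa [h.s2] at this
  by_contra hcard
  set p := nxt (s d) with hp
  set q := s (d + 1) with hq
  have hψp : ψ p = d + 1 := h.s2 d
  have hψq : ψ q = d + 1 := h.s1 _
  have hψt : ψ (nxt q) = d + 2 := by rw [h.s2, fin4_add2]
  have hbp : b p = b (s d) := bchange d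
  have hbq : b (nxt q) = b q := bchange (d + 1)
  have e1 : segment ℝ (w (s d)) (w (nxt (s d))) ⊆ L d := by
    have := h.wL (s d); rwa [h.s1] at this
  have e2 : segment ℝ (w (nxt q)) (w (nxt (nxt q))) ⊆ L d := by
    have := h.wL (nxt q); rw [hψt, ← hd] at this; exact this
  have hst : segment ℝ (w (s d)) (w (nxt (s d))) ≠ segment ℝ (w (nxt q)) (w (nxt (nxt q))) := by
    intro e
    have e' := congrArg ψ (cyc_seg_inj h.hw e)
    rw [h.s1, hψt] at e'
    exact fin4_ne2 d e'.symm
  have hbne : b (s d) ≠ b (nxt q) := by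
    intro e
    refine hst (edge_unique (hBf (b (s d))) (hLf d) (h.ne _ _) (h.hw.2.2.2.1 _) (hb _) e1
      (h.hw.2.2.2.1 _) ?_ e2)
    rw [e]; exact hb _
  have hpq : p ≠ q := by
    intro e
    apply hbne
    rw [hbq, ← hbp, e]
  have hψnp : ψ (nxt p) = d + 1 := by
    rw [h.nonchange (j := p) (by rw [hψp]; exact hpq), hψp]
  have hnpp : nxt p ≠ p := nxt_ne (by omega) p
  have hnpq : nxt p = q := by
    by_contra hne
    apply hcard
    have hsub : ({p, q, nxt p} : Finset (Fin m)) ⊆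
        Finset.univ.filter (fun j => ψ j = d + 1) := by
      intro j hj
      simp only [Finset.mem_insert, Finset.mem_singleton] at hj
      simp only [Finset.mem_filter, Finset.mem_univ, true_and]
      rcases hj with rfl | rfl | rfl <;> assumption
    have := Finset.card_le_card hsub
    rw [Finset.card_eq_three.2 ⟨p, q, nxt p, hpq, hnpp.symm, Ne.symm hne, rfl⟩] at this
    exact this
  have hxp : w q ∈ B (b p) := by rw [← hnpq]; exact hb p (right_mem_segment _ _ _)
  have hxq : w q ∈ B (b q) := hb q (left_mem_segment _ _ _)
  have hxL : w q ∈ L (d + 1) := by rw [← hψq]; exact h.wL q (left_mem_segment _ _ _)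
  have hxγ : w q ∈ γ := cyc_seg_sub h.hw q (left_mem_segment _ _ _)
  have hbpq : b p ≠ b q := by rw [hbp, ← hbq]; exact hbne
  have hFB : ∀ i, B i ≠ L d := fun i => h.ne _ _
  rcases (h.hB.2.2.2 le_rfl (b p) (b q) hbpq).1 ⟨_, hxp, hxq⟩ with e | e
  · rw [nxt4] at e
    refine h.no_bridge (d := d + 1) (c := b p) (hLf d) hFB (loop_ne h.hL d) (h.hw.2.2.2.1 (s d))
      (h.hw.2.2.2.1 (nxt q)) hst e1 e2 ?_ ?_ (cyc_seg_sub h.hw _) (h.hw.2.2.1 q) hxγ hxp ?_ hxL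
    · rw [hbp]; exact hb _
    · rw [← e, ← hbq]; exact hb _
    · rw [← e]; exact hxq
  · rw [nxt4] at e
    refine h.no_bridge (d := d + 1) (c := b q) (hLf d) hFB (loop_ne h.hL d)
      (h.hw.2.2.2.1 (nxt q)) (h.hw.2.2.2.1 (s d)) hst.symm e2 e1 ?_ ?_ (cyc_seg_sub h.hw _)
      (h.hw.2.2.1 q) hxγ hxq ?_ hxL
    · rw [← hbq]; exact hb _
    · rw [← e, hbp]; exact hb _
    · rw [← e]; exact hxp

theorem fiber_one (h : Ctx P γ B L v w φ ψ s) {e : Fin 4}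
    (hc : (Finset.univ.filter (fun j => ψ j = e + 1)).card ≤ 1) : nxt (s e) = s (e + 1) :=
  Finset.card_le_one.1 hc _ (by simp [h.s2]) _ (by simp [h.s1])

theorem fiber_three (h : Ctx P γ B L v w φ ψ s) {e : Fin 4}
    (hne : nxt (s e) ≠ s (e + 1))
    (hc : (Finset.univ.filter (fun j => ψ j = e + 1)).card = 3) :
    ψ (nxt (nxt (s e))) = e + 1 ∧ nxt (nxt (nxt (s e))) = s (e + 1) := by
  have hm := h.hw.1
  obtain ⟨x, y, z, hxy, hxz, hyz, hS⟩ := Finset.card_eq_three.1 hc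
  have hmem : ∀ j, ψ j = e + 1 ↔ j = x ∨ j = y ∨ j = z := by
    intro j
    have : j ∈ Finset.univ.filter (fun j => ψ j = e + 1) ↔ j ∈ ({x, y, z} : Finset (Fin m)) := by
      rw [hS]
    simpa using this
  have hnc : ∀ j, ψ j = e + 1 → j ≠ s (e + 1) → ψ (nxt j) = e + 1 := by
    intro j hj hj'
    rw [h.nonchange (by rw [hj]; exact hj'), hj]
  have hp := h.s2 e
  have hq := h.s1 (e + 1)
  have hse : ψ (s e) ≠ e + 1 := by rw [h.s1]; exact (fin4_ne e).symm
  have hinj : ∀ i j : Fin m, nxt i = nxt j → i = j := fun i j hij => nxt_injective hij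
  have hne1 : ∀ i : Fin m, nxt i ≠ i := nxt_ne (by omega)
  have hnp := hnc _ hp hne
  refine ⟨hnp, ?_⟩
  set p := nxt (s e) with hpdef
  set q := s (e + 1) with hqdef
  have hpj : ∀ j, ψ j = e + 1 → nxt j ≠ p := by
    intro j hj hjp
    apply hse
    rw [← hinj _ _ hjp]; exact hj
  -- the middle element
  have hr : ∃ r, ψ r = e + 1 ∧ r ≠ p ∧ r ≠ q := by
    by_contra hcon
    push Not at hcon
    have k1 := hcon x ((hmem x).2 (by simp))
    have k2 := hcon y ((hmem y).2 (by simp))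
    have k3 := hcon z ((hmem z).2 (by simp))
    grind
  obtain ⟨r, hr, hrp, hrq⟩ := hr
  have hall : ∀ j, ψ j = e + 1 → j = p ∨ j = q ∨ j = r := by
    intro j hj
    have k1 := (hmem p).1 hp
    have k2 := (hmem q).1 hq
    have k3 := (hmem r).1 hr
    have k4 := (hmem j).1 hj
    grind
  have hnr := hnc r hr hrq
  have hrq' : nxt r = q := by
    rcases hall _ hnr with k | k | k
    · exact absurd k (hpj r hr)
    · exact k
    · exact absurd k (hne1 r)
  rcases hall _ hnp with k | k | k
  · exact absurd k (hne1 p)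
  · exact absurd (hinj _ _ (k.trans hrq'.symm)).symm hrp
  · rw [k]; exact hrq'

/-- The chord `L d ∩ L (d+1)`. -/
theorem chord (h : Ctx P γ B L v w φ ψ s) {d : Fin 4} (hd : L d = L (d + 2)) :
    L d ∩ L (d + 1) = segment ℝ (w (nxt (s d))) (w (nxt (s (d + 1)))) := by
  have hedge := h.hL.2.2 (by norm_num) d
  rw [nxt4] at hedge
  refine edge_eq_segment hedge (h.hw.2.2.1 _) (h.hw.2.2.1 _) ?_ ⟨?_, ?_⟩ ⟨?_, ?_⟩
  · intro e
    have e' := congrArg ψ (nxt_injective (h.hw.2.1 e))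
    rw [h.s1, h.s1] at e'
    exact fin4_ne d e'.symm
  · have := h.wL (s d) (right_mem_segment _ _ _)
    rwa [h.s1] at this
  · have := h.wL (nxt (s d)) (left_mem_segment _ _ _)
    rwa [h.s2] at this
  · have := h.wL (nxt (s (d + 1))) (left_mem_segment _ _ _)
    rwa [h.s2, fin4_add2, ← hd] at this
  · have := h.wL (s (d + 1)) (right_mem_segment _ _ _)
    rwa [h.s1] at this

theorem quad_of {K : Set E3} (hK : IsFacetOf K P) (a b c d : E3) (hinj : Function.Injective ![a, b, c, d])
    (ha : IsVertexOf a P) (hb : IsVertexOf b P) (hc : IsVertexOf c P) (hd : IsVertexOf d P)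
    (e1 : IsEdgeOf (segment ℝ a b) P) (e2 : IsEdgeOf (segment ℝ b c) P)
    (e3 : IsEdgeOf (segment ℝ c d) P) (e4 : IsEdgeOf (segment ℝ d a) P)
    (k1 : segment ℝ a b ⊆ K) (k2 : segment ℝ b c ⊆ K) (k3 : segment ℝ c d ⊆ K)
    (k4 : segment ℝ d a ⊆ K) : facetEdges P K = 4 := by
  refine polygon_count hK (v := ![a, b, c, d])
    ⟨by norm_num, hinj, ?_, ?_, rfl⟩ ?_
  · intro i; fin_cases i <;> assumption
  · intro i; fin_cases i <;> assumption
  · refine iUnion_subset ?_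
    intro i; fin_cases i <;> assumption

theorem quad_side (h : Ctx P γ B L v w φ ψ s) {d : Fin 4} (hd : L d = L (d + 2))
    (hc : (Finset.univ.filter (fun j => ψ j = d + 1)).card = 3)
    (hne : nxt (s d) ≠ s (d + 1)) : facetEdges P (L (d + 1)) = 4 := by
  obtain ⟨h1, h2⟩ := h.fiber_three hne hc
  have hch := h.chord hd
  have hedge := h.hL.2.2 (by norm_num) d
  rw [nxt4, hch, ← h2, segment_symm] at hedge
  have hm := h.hw.1
  have hsd : ψ (s d) = d := h.s1 d
  have hp := h.s2 d
  have hq : ψ (nxt (nxt (nxt (s d)))) = d + 1 := by rw [h2, h.s1]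
  have ht : ψ (nxt (nxt (nxt (nxt (s d))))) = d + 2 := by rw [h2, h.s2, fin4_add2]
  have hinj : ∀ i j : Fin m, nxt i = nxt j → i = j := fun i j hij => nxt_injective hij
  have n1 : ∀ i : Fin m, nxt i ≠ i := nxt_ne (by omega)
  have n2 : ∀ i : Fin m, nxt (nxt i) ≠ i := nxt_nxt_ne hm
  have f1 : d + 2 ≠ d + 1 := (by decide : ∀ d : Fin 4, d + 2 ≠ d + 1) d
  have n3 : nxt (nxt (nxt (nxt (s d)))) ≠ nxt (s d) := by
    intro e
    rw [e, hp] at ht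
    exact f1 ht.symm
  have winj := h.hw.2.1
  refine quad_of (h.hL.2.1 _) (w (nxt (s d))) (w (nxt (nxt (s d)))) (w (nxt (nxt (nxt (s d)))))
    (w (nxt (nxt (nxt (nxt (s d)))))) ?_ (h.hw.2.2.1 _) (h.hw.2.2.1 _) (h.hw.2.2.1 _)
    (h.hw.2.2.1 _) (h.hw.2.2.2.1 _) (h.hw.2.2.2.1 _) (h.hw.2.2.2.1 _) hedge ?_ ?_ ?_ ?_
  · intro i j hij
    fin_cases i <;> fin_cases j <;> first | rfl | (exfalso; have hij := winj hij; grind)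
  · rw [← hp]; exact h.wL _
  · rw [← h1]; exact h.wL _
  · rw [← hq]; exact h.wL _
  · rw [segment_symm, h2, ← hch]; exact inter_subset_right

theorem no_repeat (h : Ctx P γ B L v w φ ψ s) (h4 : pVec P 4 ≤ 2) {d : Fin 4}
    (hd : L d = L (d + 2)) : False := by
  have a22 : d + 2 + 2 = d := fin4_add4 d
  have a21 : d + 2 + 1 = d + 3 := (by decide : ∀ d : Fin 4, d + 2 + 1 = d + 3) d
  have a11 : d + 1 + 1 = d + 2 := fin4_add2 d
  have a31 : d + 3 + 1 = d := (by decide : ∀ d : Fin 4, d + 3 + 1 = d) d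
  have hd2 : L (d + 2) = L (d + 2 + 2) := by rw [a22]; exact hd.symm
  have c1 := h.arc_ge hd
  have c3 := h.arc_ge hd2
  have hpos : ∀ e, 1 ≤ (Finset.univ.filter (fun j => ψ j = e)).card := by
    intro e
    exact Finset.card_pos.2 ⟨s e, by simp [h.s1]⟩
  have c0 := hpos d
  have c2 := hpos (d + 2)
  have hsum : ∑ e : Fin 4, (Finset.univ.filter (fun j => ψ j = e)).card = m := by
    have := Finset.card_eq_sum_card_fiberwise (s := (Finset.univ : Finset (Fin m)))
      (t := (Finset.univ : Finset (Fin 4))) (f := ψ) (fun _ _ => by simp)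
    rw [← this]; simp
  have hrot : ∀ (f : Fin 4 → ℕ), ∑ e, f e = f d + f (d + 1) + f (d + 2) + f (d + 2 + 1) := by
    intro f
    rw [Fin.sum_univ_four]
    fin_cases d
    · rfl
    · change _ = f 1 + f 2 + f 3 + f 0
      ring
    · change _ = f 2 + f 3 + f 0 + f 1
      ring
    · change _ = f 3 + f 0 + f 1 + f 2
      ring
  rw [hrot] at hsum
  have hm8 := h.card_le
  have d0 : (Finset.univ.filter (fun j => ψ j = d + 3 + 1)).card ≤ 1 := by rw [a31]; omega
  have d2 : (Finset.univ.filter (fun j => ψ j = d + 1 + 1)).card ≤ 1 := by rw [a11]; omega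
  have d1 : (Finset.univ.filter (fun j => ψ j = d + 1)).card = 3 := by omega
  have d3 : (Finset.univ.filter (fun j => ψ j = d + 2 + 1)).card = 3 := by omega
  have t0 := h.fiber_one d0
  rw [a31] at t0
  have t2 := h.fiber_one d2
  rw [a11] at t2
  have ch1 := h.chord hd
  have ch3 := h.chord hd2
  rw [a21] at ch3
  have ed1 := h.hL.2.2 (by norm_num) d
  rw [nxt4, ch1] at ed1
  have ed3 := h.hL.2.2 (by norm_num) (d + 2)
  rw [nxt4, a21, ch3] at ed3
  have sinj : ∀ e e', w (nxt (s e)) = w (nxt (s e')) → e = e' := by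
    intro e e' he
    have := congrArg ψ (nxt_injective (h.hw.2.1 he))
    rwa [h.s1, h.s1] at this
  have sne : ∀ e, nxt (s e) = s (e + 1) →
      segment ℝ (w (nxt (s e))) (w (nxt (s (e + 1)))) =
        segment ℝ (w (s (e + 1))) (w (nxt (s (e + 1)))) := by
    intro e he
    rw [he]
  -- the arcs of length three do not collapse
  have ne_of : ∀ e, L e = L (e + 2) → nxt (s e) ≠ s (e + 1) := by
    intro e he hcon
    -- then the chord is an edge of the cycle, and lies in three facets
    have hch := h.chord he
    rw [sne e hcon] at hch
    obtain ⟨k, hk⟩ := cyc_edge h.hv (h.hw.2.2.2.1 (s (e + 1))) (cyc_seg_sub h.hw _)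
    have hkB := h.vB k
    rw [← hk, ← hch] at hkB
    have hx1 : w (s (e + 1)) ∈ L e ∩ L (e + 1) := by rw [hch]; exact left_mem_segment _ _ _
    have hedge := h.hw.2.2.2.1 (s (e + 1))
    rw [← hch] at hedge
    have i1 := facet_inter_eq (h.hB.2.1.2.1 (φ k)) (h.hL.2.1 e) (h.ne _ _) hedge hkB
      inter_subset_left
    -- the edge before it lies in `L e`, and in the same belt facet
    obtain ⟨k', hk'⟩ := cyc_edge h.hv (h.hw.2.2.2.1 (s e)) (cyc_seg_sub h.hw _)
    have hk'B := h.vB k'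
    rw [← hk'] at hk'B
    have hx2 : w (s (e + 1)) ∈ B (φ k') := by
      rw [← hcon]; exact hk'B (right_mem_segment _ _ _)
    have hsL := h.wL (s e)
    rw [h.s1] at hsL
    by_cases hB : B (φ k') = B (φ k)
    · have := edge_unique (h.hB.2.1.2.1 (φ k)) (h.hL.2.1 e) (h.ne _ _) hedge hkB inter_subset_left
        (h.hw.2.2.2.1 (s e)) (hB ▸ hk'B) hsL
      rw [hch] at this
      have := congrArg ψ (cyc_seg_inj h.hw this)
      rw [h.s1, h.s1] at this
      exact fin4_ne e this
    · exact four_facets h.hP.1 (h.hw.2.2.1 (s (e + 1))) (h.hB.2.1.2.1 _) (h.hB.2.1.2.1 _)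
        (h.hL.2.1 _) (h.hL.2.1 _) hx2 (hkB hx1) hx1.1 hx1.2 hB (h.ne _ _) (h.ne _ _) (h.ne _ _)
        (h.ne _ _) (loop_ne h.hL e)
  have q1 := h.quad_side hd d1 (ne_of _ hd)
  have q3 := h.quad_side hd2 d3 (ne_of _ hd2)
  rw [a21] at q3
  have x01 : d ≠ d + 1 := (fin4_ne d).symm
  have x02 : d ≠ d + 2 := (fin4_ne2 d).symm
  have x03 : d ≠ d + 3 := (by decide : ∀ d : Fin 4, d ≠ d + 3) d
  have x12 : d + 1 ≠ d + 2 := (by decide : ∀ d : Fin 4, d + 1 ≠ d + 2) d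
  have x13 : d + 1 ≠ d + 3 := (by decide : ∀ d : Fin 4, d + 1 ≠ d + 3) d
  have x23 : d + 2 ≠ d + 3 := (by decide : ∀ d : Fin 4, d + 2 ≠ d + 3) d
  have seg2 := sne (d + 1) (by rw [a11]; exact t2)
  rw [a11] at seg2
  have seg0 := sne (d + 3) (by rw [a31]; exact t0)
  rw [a31] at seg0
  have qF : facetEdges P (L d) = 4 := by
    refine quad_of (h.hL.2.1 _) (w (nxt (s d))) (w (nxt (s (d + 1)))) (w (nxt (s (d + 2))))
      (w (nxt (s (d + 3)))) ?_ (h.hw.2.2.1 _) (h.hw.2.2.1 _) (h.hw.2.2.1 _)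
      (h.hw.2.2.1 _) ed1 ?_ ed3 ?_ ?_ ?_ ?_ ?_
    · intro i j hij
      fin_cases i <;> fin_cases j <;> first | rfl | (exfalso; have hij := sinj _ _ hij; grind)
    · rw [seg2]; exact h.hw.2.2.2.1 _
    · rw [seg0]; exact h.hw.2.2.2.1 _
    · rw [← ch1]; exact inter_subset_left
    · have := h.wL (s (d + 2))
      rw [h.s1, ← hd] at this
      rw [seg2]; exact this
    · rw [← ch3, ← hd]; exact inter_subset_left
    · have := h.wL (s d)
      rw [h.s1] at this
      rw [seg0]; exact this
  have ne13 : L (d + 1) ≠ L (d + 3) := by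
    intro e
    have hm : w (nxt (s (d + 2))) ∈ segment ℝ (w (nxt (s d))) (w (nxt (s (d + 1)))) := by
      rw [← ch1, e, hd, ch3]
      exact left_mem_segment _ _ _
    rcases vertex_mem_segment (h.hw.2.2.1 _) (vertex_mem (h.hw.2.2.1 _))
      (vertex_mem (h.hw.2.2.1 _)) hm with k | k
    · exact x02 (sinj _ _ k).symm
    · exact x12 (sinj _ _ k).symm
  have ne01 : L d ≠ L (d + 1) := loop_ne h.hL d
  have ne03 : L d ≠ L (d + 3) := by
    have := loop_ne h.hL (d + 2)
    rwa [a21, ← hd] at this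
  have hfin : {F | IsFacetOf F P ∧ facetEdges P F = 4}.Finite :=
    (faces_finite h.hP.1.1).subset (fun F hF => hF.1.1)
  have hsub : ({L d, L (d + 1), L (d + 3)} : Set (Set E3)) ⊆
      {F | IsFacetOf F P ∧ facetEdges P F = 4} := by
    rintro F (rfl | rfl | rfl)
    · exact ⟨h.hL.2.1 _, qF⟩
    · exact ⟨h.hL.2.1 _, q1⟩
    · exact ⟨h.hL.2.1 _, q3⟩
  have hle := Set.ncard_le_ncard hsub hfin
  rw [Set.ncard_insert_of_notMem (by simp [ne01, ne03]), Set.ncard_pair ne13] at hle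
  rw [pVec] at h4
  omega

end Ctx

/-- In a flag 3-polytope with `p₄ ≤ 2`, if a 4-belt borders a 4-loop, then the four
facets of the 4-loop are pairwise different. -/
theorem four_belt_borders_injective (P : Set E3) (hP : IsFlag3Polytope P)
    (h4 : pVec P 4 ≤ 2) (B L : Fin 4 → Set E3) (hB : IsBelt P B) (hL : IsLoop P L)
    (hbord : Borders P B L) :
    Function.Injective L := by
  obtain ⟨γ, C₁, C₂, hC₁, hC₂, hne, ⟨_, hB1, n, v, φ, hv, vB, φstep, φs, φc⟩,
    ⟨_, hL1, m, w, ψ, hw, wL, ψstep, ψs, ψc⟩⟩ := hbord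
  have hneBL : ∀ i j, B i ≠ L j := by
    intro i j e
    obtain ⟨q, hq⟩ := (intrinsicInterior_nonempty (hL.2.1 j).1.2.2.1).2 (hL.2.1 j).1.1
    have h1 := hB1 i
    rw [e] at h1
    exact Set.disjoint_left.1 (comp_disjoint hC₁ hC₂ hne) (h1 hq) (hL1 j hq)
  obtain ⟨_, φu⟩ := turn_unique φ φstep φs (φc (by norm_num))
  obtain ⟨ψe, ψu⟩ := turn_unique ψ ψstep ψs (ψc (by norm_num))
  choose s s1 s2 using ψe
  have ctx : Ctx P γ B L v w φ ψ s :=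
    { hP := hP, hB := hB, hL := hL, hv := hv, hw := hw, vB := vB, wL := wL
      φstep := fun i => by rw [← nxt4]; exact φstep i
      ψstep := fun i => by rw [← nxt4]; exact ψstep i
      φcard := φc (by norm_num), ψcard := ψc (by norm_num), φuniq := φu, ψuniq := ψu
      s1 := s1, s2 := fun d => by rw [← nxt4]; exact s2 d, ne := hneBL }
  intro i j hij
  by_contra hne'
  have hcase : j = i + 1 ∨ i = j + 1 ∨ j = i + 2 := 
    (by decide : ∀ i j : Fin 4, ¬ i = j → j = i + 1 ∨ i = j + 1 ∨ j = i + 2) i j hne'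
  rcases hcase with e | e | e
  · exact loop_ne hL i (by rw [← e]; exact hij)
  · exact loop_ne hL j (by rw [← e]; exact hij.symm)
  · exact ctx.no_repeat h4 (d := i) (by rw [← e]; exact hij)
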